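/- Under the independence-of-resampled-tokens assumption, for any two sequences x, y ∈ V^n with x_i = y_i for all i ∉ L, the probability assigned by the resampling procedure to x, namely (∏_{i∉L} p_i(y_1,…,y_{i−1})(y_i)) · (∏_{j∈L} p_j(y_1,…,y_{j−1})(x_j)), equals the autoregressive probability of x, namely ∏_{i=1}^{n} p_i(x_1,…,x_{i−1})(x_i) = P(x). -/

import Mathlib

/-!
If two sequences differ only at positions in `L`, their prefixes can be transformed into each
other by changing one position of `L` at a time, and by the independence assumption each such
change leaves the next-token distribution at every position untouched
(`IndepResampledTokens.apply_prefixOf_eq`). So in both products the prefixes of `y` may be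
replaced by those of `x`; the kept tokens agree as well, and the two products recombine into the product over all
positions.
-/

/-- The prefix `(x_1, …, x_{i-1})` of a sequence `x ∈ V^n`, i.e. the restriction of `x`
to the positions strictly before `i`. -/
def prefixOf {V : Type*} {n : ℕ} (x : Fin n → V) (i : Fin n) : Fin i → V :=
  fun l => x ⟨l, l.isLt.trans i.isLt⟩

/-- **Independence of resampled tokens** (Assumption 3.1): for every `j ∈ L`, every
position `i > j`, and any two prefixes `w, w'` of length `i` agreeing everywhere except
possibly at position `j`, the conditional next-token distributions agree: `p i w = p i w'`. -/
def IndepResampledTokens {V : Type*} {n : ℕ}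
    (p : (i : Fin n) → (Fin i → V) → PMF V) (L : Finset (Fin n)) : Prop :=
  ∀ j ∈ L, ∀ i : Fin n, j < i → ∀ w w' : Fin i → V,
    (∀ l : Fin i, (l : ℕ) ≠ (j : ℕ) → w l = w' l) → p i w = p i w'

/-- Changing a sequence at any set `S` of resampled positions, not just at a single one, does not
affect the next-token distributions. -/
theorem IndepResampledTokens.apply_prefixOf_eq {V : Type*} {n : ℕ}
    {p : (i : Fin n) → (Fin i → V) → PMF V} {L : Finset (Fin n)}
    (hp : IndepResampledTokens p L) (i : Fin n) (S : Finset (Fin n)) (hS : S ⊆ L)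
    (x y : Fin n → V) (hxy : ∀ k ∉ S, x k = y k) :
    p i (prefixOf x i) = p i (prefixOf y i) := by
  induction S using Finset.induction_on generalizing x with
  | empty =>
    have h : x = y := funext fun k => hxy k (Finset.notMem_empty k)
    rw [h]
  | insert j S _ ih =>
    -- Pass through the sequence obtained from `x` by correcting position `j` only.
    have hstep : p i (prefixOf x i) = p i (prefixOf (Function.update x j (y j)) i) := by
      by_cases hji : j < i
      · refine hp j (hS (Finset.mem_insert_self j S)) i hji _ _ fun l hl => ?_
        unfold prefixOf
        rw [Function.update_of_ne]
        exact fun h => hl (congrArg Fin.val h)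
      -- Otherwise position `j` is not part of the prefix, so the prefixes coincide.
      · congr 1
        funext l
        unfold prefixOf
        rw [Function.update_of_ne]
        intro h
        apply hji
        rw [← h]
        exact l.isLt
    rw [hstep]
    refine ih ((Finset.subset_insert j S).trans hS) _ fun k hk => ?_
    by_cases hkj : k = j
    · subst hkj
      exact Function.update_self _ _ _
    · rw [Function.update_of_ne hkj]
      exact hxy k (by simp [hkj, hk])

/-- Under the independence-of-resampled-tokens assumption, for any two sequences
`x, y ∈ V^n` agreeing outside `L`, the probability assigned by the resampling procedure
to `x`, namely `(∏_{i∉L} p_i(y_{<i})(y_i)) · (∏_{j∈L} p_j(y_{<j})(x_j))`, equals the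
autoregressive probability `P(x) = ∏_{i=1}^n p_i(x_{<i})(x_i)`. -/
theorem resampling_prob_eq_autoregressive_prob
    {V : Type*} [Fintype V] [Nonempty V] {n : ℕ}
    (p : (i : Fin n) → (Fin i → V) → PMF V) (L : Finset (Fin n))
    (hp : IndepResampledTokens p L)
    (x y : Fin n → V) (hxy : ∀ i ∉ L, x i = y i) :
    (∏ i ∈ Lᶜ, p i (prefixOf y i) (y i)) * (∏ j ∈ L, p j (prefixOf y j) (x j))
      = ∏ i : Fin n, p i (prefixOf x i) (x i) := by
  have hprefix : ∀ i, p i (prefixOf x i) = p i (prefixOf y i) := fun i =>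
    hp.apply_prefixOf_eq i L subset_rfl x y hxy
  rw [← Finset.prod_compl_mul_prod L]
  congr 1
  · refine Finset.prod_congr rfl fun i hi => ?_
    rw [hprefix, hxy i (Finset.mem_compl.mp hi)]
  · exact Finset.prod_congr rfl fun j _ => by rw [hprefix]
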